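/- Let (X,ρ) be a metric space, let f : [0,∞) → [0,∞) be an unbounded modulus, let (A_i) be a sequence in CL(X) and let A ∈ CL(X). Then [WS^f]-lim A_i = A holds if and only if, for each x ∈ X, there exists a set K_x ⊆ ℕ such that d^f(K_x) = 0 and the sequence (d(x,A_i)) restricted to indices i ∈ ℕ − K_x converges to d(x,A). -/

import Mathlib

open Filter Metric Set
open scoped Classical

/-- A modulus: `f : [0,∞) → [0,∞)` with `f x = 0 ↔ x = 0`, subadditive,
increasing, and continuous (all on `[0,∞)`). -/
def IsModulus (f : ℝ → ℝ) : Prop :=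
  (∀ x : ℝ, 0 ≤ x → 0 ≤ f x) ∧
  (∀ x : ℝ, 0 ≤ x → (f x = 0 ↔ x = 0)) ∧
  (∀ x y : ℝ, 0 ≤ x → 0 ≤ y → f (x + y) ≤ f x + f y) ∧
  MonotoneOn f (Set.Ici 0) ∧
  ContinuousOn f (Set.Ici 0)

/-- `f` is unbounded on `[0,∞)`. -/
def IsUnboundedOn (f : ℝ → ℝ) : Prop := ∀ M : ℝ, ∃ x : ℝ, 0 ≤ x ∧ M < f x

/-- The number of elements `k ≤ n` with `k ∈ K`. -/
noncomputable def countLe (K : Set ℕ) (n : ℕ) : ℕ := Nat.card {k : ℕ | k ≤ n ∧ k ∈ K}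

/-- `K ⊆ ℕ` has `f`-density `d`: `lim_n f(|{k ≤ n : k ∈ K}|)/f(n) = d`. -/
def HasFDensity (f : ℝ → ℝ) (K : Set ℕ) (d : ℝ) : Prop :=
  Tendsto (fun n : ℕ => f (countLe K n : ℝ) / f (n : ℝ)) atTop (nhds d)

/-- `K ⊆ ℕ` has natural density `d`: `lim_n |{k ≤ n : k ∈ K}|/n = d`. -/
def HasNatDensity (K : Set ℕ) (d : ℝ) : Prop :=
  Tendsto (fun n : ℕ => (countLe K n : ℝ) / (n : ℝ)) atTop (nhds d)

/-- Wijsman convergence: `d(x, A_k) → d(x, A)` for every `x`. -/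
def WijsmanConvTo {X : Type*} [MetricSpace X] (Aseq : ℕ → Set X) (A : Set X) : Prop :=
  ∀ x : X, Tendsto (fun k : ℕ => infDist x (Aseq k)) atTop (nhds (infDist x A))

/-- Wijsman statistical convergence (with respect to the natural density). -/
def WijsmanStatConvTo {X : Type*} [MetricSpace X] (Aseq : ℕ → Set X) (A : Set X) : Prop :=
  ∀ x : X, ∀ ε : ℝ, 0 < ε →
    HasNatDensity {k : ℕ | ε ≤ |infDist x (Aseq k) - infDist x A|} 0

/-- `f`-Wijsman statistical convergence: `[WS^f]-lim A_k = A`. -/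
def FWijsmanStatConvTo (f : ℝ → ℝ) {X : Type*} [MetricSpace X]
    (Aseq : ℕ → Set X) (A : Set X) : Prop :=
  ∀ x : X, ∀ ε : ℝ, 0 < ε →
    HasFDensity f {k : ℕ | ε ≤ |infDist x (Aseq k) - infDist x A|} 0

/-- Wijsman boundedness: `sup_k d(x, A_k) < ∞` for every `x`. -/
def WijsmanBounded {X : Type*} [MetricSpace X] (Aseq : ℕ → Set X) : Prop :=
  ∀ x : X, ∃ M : ℝ, ∀ k : ℕ, infDist x (Aseq k) ≤ M

/-- Wijsman Cesàro summability to `A`. -/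
def WijsmanCesaroTo {X : Type*} [MetricSpace X] (Aseq : ℕ → Set X) (A : Set X) : Prop :=
  ∀ x : X, Tendsto (fun n : ℕ => (∑ k ∈ Finset.range n, infDist x (Aseq k)) / (n : ℝ))
    atTop (nhds (infDist x A))

/-- Wijsman strong Cesàro summability to `A` with respect to a modulus `f`:
`[Ww^f]-lim A_k = A`. -/
def WijsmanStrongCesaroTo (f : ℝ → ℝ) {X : Type*} [MetricSpace X]
    (Aseq : ℕ → Set X) (A : Set X) : Prop :=
  ∀ x : X, Tendsto
    (fun n : ℕ => (∑ k ∈ Finset.range n, f |infDist x (Aseq k) - infDist x A|) / (n : ℝ))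
    atTop (nhds 0)

/-- A slowly varying modulus: `lim_{x→∞} f(ax)/f(x) = 1` for every `a > 0`. -/
def SlowlyVaryingOn (f : ℝ → ℝ) : Prop :=
  ∀ a : ℝ, 0 < a → Tendsto (fun x : ℝ => f (a * x) / f x) atTop (nhds 1)

/-!
The sets of zero `f`-density form an ideal containing the finite sets, and `f`-statistical
convergence is convergence along the dual filter. The ideal is a P-ideal: given an increasing
sequence `K 0 ⊆ K 1 ⊆ ⋯` in it, let `J n → ∞` increase so slowly that `K (J n)` has small
relative `f`-count up to `n`; then `{i | i ∈ K (J i)}` is in the ideal and contains each `K j` up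
to finitely many elements. Applied to the sets where the sequence leaves the `j`-th member of a
countable neighbourhood basis of the limit, this gives one exceptional set off which the sequence
converges.
-/

/-- A gauge on `[0,∞)`, generalizing unbounded moduli: conditions on `f` under which the sets of
zero `f`-density form an ideal containing the finite sets. -/
structure IsDensityGauge (f : ℝ → ℝ) : Prop where
  monotoneOn : MonotoneOn f (Ici 0)
  subadditive : ∀ x y : ℝ, 0 ≤ x → 0 ≤ y → f (x + y) ≤ f x + f y
  unbounded : IsUnboundedOn f

lemma IsModulus.isDensityGauge {f : ℝ → ℝ} (hf : IsModulus f) (hfu : IsUnboundedOn f) :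
    IsDensityGauge f :=
  let ⟨_, _, hsub, hmono, _⟩ := hf
  ⟨hmono, hsub, hfu⟩

section Counting

variable {K L : Set ℕ} {n : ℕ}

lemma countLe_eq_ncard (K : Set ℕ) (n : ℕ) : countLe K n = (Iic n ∩ K).ncard := rfl

lemma countLe_le_countLe (h : ∀ k ≤ n, k ∈ K → k ∈ L) : countLe K n ≤ countLe L n :=
  ncard_le_ncard (fun k hk => ⟨hk.1, h k hk.1 hk.2⟩) ((finite_Iic n).inter_of_left L)

lemma countLe_union_le (K L : Set ℕ) (n : ℕ) :
    countLe (K ∪ L) n ≤ countLe K n + countLe L n := by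
  simp only [countLe_eq_ncard, inter_union_distrib_left]
  exact ncard_union_le _ _

lemma countLe_le_ncard (hK : K.Finite) (n : ℕ) : countLe K n ≤ K.ncard :=
  ncard_le_ncard inter_subset_right hK

end Counting

lemma exists_monotone_tendsto_atTop_eventually_diag {P : ℕ → ℕ → Prop}
    (h : ∀ j, ∀ᶠ n in atTop, P j n) :
    ∃ J : ℕ → ℕ, Monotone J ∧ Tendsto J atTop atTop ∧ ∀ᶠ n in atTop, P (J n) n := by
  choose N hN using fun j => eventually_atTop.1 (h j)
  refine ⟨fun n => Nat.findGreatest (fun j => N j ≤ n) n, ?_, ?_, ?_⟩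
  · exact fun m n hmn => Nat.findGreatest_mono (fun j hj => le_trans hj hmn) hmn
  · refine tendsto_atTop.2 fun j => ?_
    filter_upwards [eventually_ge_atTop j, eventually_ge_atTop (N j)] with n hjn hNn
    exact Nat.le_findGreatest hjn hNn
  · filter_upwards [eventually_ge_atTop (N 0)] with n hn
    exact hN _ n (Nat.findGreatest_spec (P := fun j => N j ≤ n) n.zero_le hn)

namespace IsDensityGauge

variable {f : ℝ → ℝ} {K L : Set ℕ}

lemma natCast_le_natCast (hf : IsDensityGauge f) {m n : ℕ} (hmn : m ≤ n) : f m ≤ f n :=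
  hf.monotoneOn (mem_Ici.2 m.cast_nonneg) (mem_Ici.2 n.cast_nonneg) (Nat.cast_le.2 hmn)

lemma natCast_nonneg (hf : IsDensityGauge f) (n : ℕ) : 0 ≤ f n := by
  have double : f (n + n) ≤ f n + f n := hf.subadditive n n n.cast_nonneg n.cast_nonneg
  have mono : f n ≤ f (n + n) := by exact_mod_cast hf.natCast_le_natCast (n.le_add_left n)
  linarith

lemma tendsto_natCast_atTop (hf : IsDensityGauge f) :
    Tendsto (fun n : ℕ => f n) atTop atTop := by
  refine tendsto_atTop_atTop_of_monotone (fun _ _ => hf.natCast_le_natCast) fun M => ?_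
  obtain ⟨x, hx, hMx⟩ := hf.unbounded M
  obtain ⟨n, hxn⟩ := exists_nat_ge x
  exact ⟨n, hMx.le.trans (hf.monotoneOn hx (hx.trans hxn) hxn)⟩

lemma div_natCast_nonneg (hf : IsDensityGauge f) (m n : ℕ) : 0 ≤ f m / f n :=
  div_nonneg (hf.natCast_nonneg m) (hf.natCast_nonneg n)

lemma div_natCast_le_div_natCast (hf : IsDensityGauge f) {k m : ℕ} (hkm : k ≤ m) (n : ℕ) :
    f k / f n ≤ f m / f n :=
  div_le_div_of_nonneg_right (hf.natCast_le_natCast hkm) (hf.natCast_nonneg n)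

lemma natCast_add_div_le (hf : IsDensityGauge f) (k m n : ℕ) :
    f (k + m : ℕ) / f n ≤ f k / f n + f m / f n := by
  rw [← add_div, Nat.cast_add]
  exact div_le_div_of_nonneg_right (hf.subadditive k m k.cast_nonneg m.cast_nonneg)
    (hf.natCast_nonneg n)

lemma hasFDensity_zero_mono (hf : IsDensityGauge f) (hL : HasFDensity f L 0) (hKL : K ⊆ L) :
    HasFDensity f K 0 :=
  squeeze_zero (fun _ => hf.div_natCast_nonneg _ _)
    (fun n => hf.div_natCast_le_div_natCast (countLe_le_countLe fun _ _ hk => hKL hk) n) hL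

lemma hasFDensity_zero_union (hf : IsDensityGauge f) (hK : HasFDensity f K 0)
    (hL : HasFDensity f L 0) : HasFDensity f (K ∪ L) 0 :=
  squeeze_zero (fun _ => hf.div_natCast_nonneg _ _)
    (fun n => (hf.div_natCast_le_div_natCast (countLe_union_le K L n) n).trans
      (hf.natCast_add_div_le _ _ n))
    (add_zero (0 : ℝ) ▸ hK.add hL)

lemma hasFDensity_zero_of_finite (hf : IsDensityGauge f) (hK : K.Finite) :
    HasFDensity f K 0 :=
  squeeze_zero (fun _ => hf.div_natCast_nonneg _ _)
    (fun n => hf.div_natCast_le_div_natCast (countLe_le_ncard hK n) n)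
    (hf.tendsto_natCast_atTop.const_div_atTop _)

lemma exists_hasFDensity_zero_almost_superset (hf : IsDensityGauge f) {K : ℕ → Set ℕ}
    (hK : Monotone K) (hK₀ : ∀ j, HasFDensity f (K j) 0) :
    ∃ L, HasFDensity f L 0 ∧ ∀ j, ∀ᶠ i in atTop, i ∈ K j → i ∈ L := by
  have small (j : ℕ) : ∀ᶠ n : ℕ in atTop, f (countLe (K j) n) / f n ≤ 1 / ((j : ℝ) + 1) :=
    (hK₀ j).eventually_le_const Nat.one_div_pos_of_nat
  obtain ⟨J, J_mono, J_tendsto, J_small⟩ := exists_monotone_tendsto_atTop_eventually_diag small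
  refine ⟨{i | i ∈ K (J i)}, ?_, fun j => ?_⟩
  · have count_le (n : ℕ) : countLe {i | i ∈ K (J i)} n ≤ countLe (K (J n)) n :=
      countLe_le_countLe fun k hkn hk => hK (J_mono hkn) hk
    refine squeeze_zero' (.of_forall fun _ => hf.div_natCast_nonneg _ _) ?_
      (tendsto_one_div_add_atTop_nhds_zero_nat.comp J_tendsto)
    filter_upwards [J_small] with n hn
    exact (hf.div_natCast_le_div_natCast (count_le n) n).trans hn
  · filter_upwards [J_tendsto.eventually_ge_atTop j] with i hji hi
    exact hK hji hi

/-- The filter of sets whose complement has zero `f`-density. Convergence along it is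
`f`-statistical convergence. -/
def conull (hf : IsDensityGauge f) : Filter ℕ :=
  Filter.comk (HasFDensity f · 0) (hf.hasFDensity_zero_of_finite finite_empty)
    (fun _ ht _ hst => hf.hasFDensity_zero_mono ht hst)
    (fun _ hs _ ht => hf.hasFDensity_zero_union hs ht)

lemma mem_conull (hf : IsDensityGauge f) {s : Set ℕ} :
    s ∈ hf.conull ↔ HasFDensity f sᶜ 0 := Iff.rfl

lemma conull_le_atTop (hf : IsDensityGauge f) : hf.conull ≤ atTop := by
  rw [← Nat.cofinite_eq_atTop]
  exact fun s hs => hf.hasFDensity_zero_of_finite hs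

theorem tendsto_conull_iff_exists (hf : IsDensityGauge f) {α : Type*} {l : Filter α}
    [l.IsCountablyGenerated] {u : ℕ → α} :
    Tendsto u hf.conull l ↔
      ∃ K, HasFDensity f K 0 ∧ Tendsto u (atTop ⊓ 𝓟 Kᶜ) l := by
  constructor
  · intro hu
    obtain ⟨B, hB⟩ := l.exists_antitone_basis
    obtain ⟨K, hK, hBK⟩ := hf.exists_hasFDensity_zero_almost_superset
      (K := fun j => (u ⁻¹' B j)ᶜ)
      (fun i j hij => compl_subset_compl.2 (preimage_mono (hB.antitone hij)))
      (fun j => hu (hB.mem j))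
    refine ⟨K, hK, hB.toHasBasis.tendsto_right_iff.2 fun j _ => eventually_inf_principal.2 ?_⟩
    exact (hBK j).mono fun i hi hiK => not_not.1 (mt hi hiK)
  · rintro ⟨K, hK, hu⟩
    have compl_mem : Kᶜ ∈ hf.conull := by rwa [mem_conull, compl_compl]
    exact hu.mono_left (le_inf hf.conull_le_atTop (le_principal_iff.2 compl_mem))

lemma tendsto_conull_nhds_iff (hf : IsDensityGauge f) {E : Type*} [PseudoMetricSpace E]
    {u : ℕ → E} {a : E} :
    Tendsto u hf.conull (nhds a) ↔
      ∀ ε : ℝ, 0 < ε → HasFDensity f {k | ε ≤ dist (u k) a} 0 := by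
  refine nhds_basis_ball.tendsto_right_iff.trans (forall₂_congr fun ε _ => ?_)
  have compl_eq : {k | u k ∈ ball a ε}ᶜ = {k | ε ≤ dist (u k) a} := by
    ext k
    simp
  rw [Filter.Eventually, mem_conull, compl_eq]

end IsDensityGauge

lemma tendsto_atTop_inf_principal_compl_nhds_iff {E : Type*} [PseudoMetricSpace E]
    {K : Set ℕ} {u : ℕ → E} {a : E} :
    Tendsto u (atTop ⊓ 𝓟 Kᶜ) (nhds a) ↔
      ∀ ε : ℝ, 0 < ε → ∃ i₀ : ℕ, ∀ i : ℕ, i ∉ K → i₀ ≤ i → dist (u i) a ≤ ε := by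
  simp only [nhds_basis_closedBall.tendsto_right_iff, eventually_inf_principal, eventually_atTop,
    mem_compl_iff, mem_closedBall]
  exact forall₂_congr fun ε _ => exists_congr fun i₀ => forall_congr' fun i => forall_comm

theorem stmt5_general {E : Type*} [PseudoMetricSpace E] {f : ℝ → ℝ} (hf : IsDensityGauge f)
    (u : ℕ → E) (a : E) :
    (∀ ε : ℝ, 0 < ε → HasFDensity f {k | ε ≤ dist (u k) a} 0) ↔
      ∃ K : Set ℕ, HasFDensity f K 0 ∧
        ∀ ε : ℝ, 0 < ε → ∃ i₀ : ℕ, ∀ i : ℕ, i ∉ K → i₀ ≤ i → dist (u i) a ≤ ε := by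
  simp only [← hf.tendsto_conull_nhds_iff, ← tendsto_atTop_inf_principal_compl_nhds_iff]
  exact hf.tendsto_conull_iff_exists

/-- `[WS^f]-lim A_i = A` iff for each `x` there is `K_x ⊆ ℕ` of zero
`f`-density such that `d(x, A_i) → d(x, A)` along `ℕ − K_x`. -/
theorem stmt5 {X : Type*} [MetricSpace X] (f : ℝ → ℝ)
    (hf : IsModulus f) (hfu : IsUnboundedOn f)
    (A : Set X) (hA : A.Nonempty) (hAcl : IsClosed A)
    (Aseq : ℕ → Set X) (hAseq : ∀ i, (Aseq i).Nonempty ∧ IsClosed (Aseq i)) :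
    FWijsmanStatConvTo f Aseq A ↔
      ∀ x : X, ∃ Kx : Set ℕ, HasFDensity f Kx 0 ∧
        ∀ ε : ℝ, 0 < ε → ∃ i₀ : ℕ, ∀ i : ℕ, i ∉ Kx → i₀ ≤ i →
          |infDist x (Aseq i) - infDist x A| ≤ ε :=
  forall_congr' fun x =>
    stmt5_general (hf.isDensityGauge hfu) (fun i => infDist x (Aseq i)) (infDist x A)
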